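/- Let G be a (hole, dart)-free graph that is an atom (no clique cutset). Then for every vertex v, the subgraph induced on the anti-neighborhood A(v) contains no induced complement of C_6. -/

import Mathlib

/-!
The complement of `C₆` is the triangular prism with triangles `x₁x₂x₃` and `x₄x₅x₆`.  Suppose a
vertex `v` is outside a prism and anticomplete to it.  Grow from `{v}` a maximal connected set `K`
avoiding the prism such that the prism vertices with a neighbour in `K` form a clique `T` and no
vertex of `K` is complete to one of the two triangles (`exists_cfg`).  The claim is that the
neighbourhood of `K` is a clique (`Cfg.isClique`).  As `T` is not the whole prism, this
neighbourhood separates `v` from a prism vertex, so it is a clique cutset.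

The neighbourhood of `K` consists of `T` and of vertices `q` outside the prism; by maximality every
such `q` sees the prism in a way that breaks one of the conditions on `K`.  Up to the symmetries of
the prism, `T` is empty, a vertex, an edge of a triangle, a matching edge, or a triangle.  In each
case three kinds of argument determine the adjacency of `q` to the prism, and then show that two
such vertices `q`, `r` are adjacent:

* A vertex outside the prism, alone or together with a neighbour of it, often forms a dart or an
  induced `C₅` with prism vertices (`Prism.outside`, `Prism.outside_adj`).
* Two nonadjacent neighbours of `K` are joined by an induced path through `K`.  If they are also
  joined by an induced path through prism vertices anticomplete to `K`, the union is an induced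
  cycle, so being hole-free forces both paths to have length two (`link_main` and its instances
  `link2`, `link3`, `link4`).
* Two nonadjacent vertices with common neighbours `i`, `j` on an edge of the prism are the tips of
  a dart, with pendant a third prism vertex adjacent to `i` only (`DartFree.pair`).
-/

open SimpleGraph

/-- The dart: vertices a,b,c,d,e = 0,1,2,3,4; edges ab, ac, ad, bd, cd, de. -/
def dartGraph : SimpleGraph (Fin 5) :=
  SimpleGraph.fromEdgeSet {s(0,1), s(0,2), s(0,3), s(1,3), s(2,3), s(3,4)}

/-- The bull: vertices a,b,c,d,e = 0,1,2,3,4; edges ab, bc, cd, be, ce. -/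
def bullGraph : SimpleGraph (Fin 5) :=
  SimpleGraph.fromEdgeSet {s(0,1), s(1,2), s(2,3), s(1,4), s(2,4)}

/-- The house: C4 on v1..v4 = 0..3 plus v5 = 4 adjacent to v2 = 1 and v3 = 2. -/
def houseGraph : SimpleGraph (Fin 5) :=
  SimpleGraph.fromEdgeSet {s(0,1), s(1,2), s(2,3), s(3,0), s(4,1), s(4,2)}

/-- Anti-neighborhood of a vertex: all vertices distinct from and nonadjacent to `v`. -/
def vertexAnti {V : Type*} (G : SimpleGraph V) (v : V) : Set V :=
  {u | u ≠ v ∧ ¬ G.Adj v u}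

/-- Anti-neighborhood of a set `S`: vertices outside `S` with no neighbor in `S`. -/
def antiNbhd {V : Type*} (G : SimpleGraph V) (S : Set V) : Set V :=
  {v | v ∉ S ∧ ∀ u ∈ S, ¬ G.Adj v u}

/-- Contact vertices of `S`: outside `S`, with a neighbor in `S` and a neighbor in `antiNbhd G S`. -/
def contactSet {V : Type*} (G : SimpleGraph V) (S : Set V) : Set V :=
  {v | v ∉ S ∧ (∃ u ∈ S, G.Adj v u) ∧ ∃ w ∈ antiNbhd G S, G.Adj v w}

/-- `G` has a clique cutset: a clique whose removal disconnects the graph. -/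
def HasCliqueCutset {V : Type*} (G : SimpleGraph V) : Prop :=
  ∃ C : Set V, G.IsClique C ∧ ¬ (G.induce Cᶜ).Preconnected

/-- `U` is a module: no outside vertex distinguishes two vertices of `U`. -/
def IsModule {V : Type*} (G : SimpleGraph V) (U : Set V) : Prop :=
  ∀ z ∉ U, (∀ x ∈ U, G.Adj z x) ∨ (∀ x ∈ U, ¬ G.Adj z x)

/-- `G` is prime: all its modules are trivial. -/
def IsPrime {V : Type*} (G : SimpleGraph V) : Prop :=
  ∀ U : Set V, IsModule G U → U = ∅ ∨ (∃ x, U = {x}) ∨ U = Set.univ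

/-- `G` is perfect: every induced subgraph has chromatic number equal to clique number. -/
def IsPerfect {V : Type*} (G : SimpleGraph V) : Prop :=
  ∀ s : Set V, (G.induce s).chromaticNumber = ((G.induce s).cliqueNum : ℕ∞)

/-- Distance from a vertex to a set of vertices. -/
noncomputable def setDist {V : Type*} (G : SimpleGraph V) (v : V) (S : Set V) : ℕ :=
  sInf {n | ∃ u ∈ S, n = G.dist v u}

/-! ### Forbidden configurations -/

/-- `G` contains no induced dart, phrased by naming its five vertices: `a`, `d` are the centres of
the diamond, `b`, `c` its nonadjacent tips, and `e` is pendant at `d`.  The remaining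
distinctness conditions follow from the adjacencies. -/
def DartFree {V : Type*} (G : SimpleGraph V) : Prop :=
  ∀ d a b c e : V, G.Adj d a → G.Adj d b → G.Adj d c → G.Adj a b → G.Adj a c → G.Adj d e →
    b ≠ c → ¬ G.Adj b c → ¬ G.Adj a e → ¬ G.Adj b e → ¬ G.Adj c e → False

/-- `G` contains no hole, with the induced cycle given as a sequence `p 0, …, p (n - 1)`. -/
def HoleFree {V : Type*} (G : SimpleGraph V) : Prop :=
  ∀ (n : ℕ) (p : ℕ → V), 5 ≤ n →
    (∀ i j, i < j → j < n → p i ≠ p j) →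
    (∀ i j, i < j → j < n → (G.Adj (p i) (p j) ↔ (j = i + 1 ∨ (i = 0 ∧ j + 1 = n)))) → False

section
variable {V : Type*} {G : SimpleGraph V}

theorem dartFree_of_isEmpty (h : IsEmpty (dartGraph ↪g G)) : DartFree G := by
  intro d a b c e da db dc ab ac de bc nbc nae nbe nce
  have hbe : b ≠ e := by rintro rfl; exact nae ab
  have hce : c ≠ e := by rintro rfl; exact nae ac
  have hae : a ≠ e := by rintro rfl; exact nbe ab.symm
  have h1 := da.ne; have h2 := db.ne; have h3 := dc.ne
  have h4 := ab.ne; have h5 := ac.ne; have h6 := de.ne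
  refine h.false ⟨⟨![a, b, c, d, e], ?_⟩, ?_⟩
  · intro i j hij
    fin_cases i <;> fin_cases j <;> simp_all
  · intro i j
    have s := fun x y => G.adj_comm x y
    fin_cases i <;> fin_cases j <;> simp [dartGraph] <;> first | assumption | (symm; assumption) |
      (rw [s]; assumption)

theorem holeFree_of_isEmpty (h : ∀ k : ℕ, 5 ≤ k → IsEmpty (cycleGraph k ↪g G)) : HoleFree G := by
  intro n p hn hne hadj
  obtain ⟨m, rfl⟩ : ∃ m, n = m + 2 := ⟨n - 2, by omega⟩
  have key : ∀ i j : Fin (m + 2), i < j →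
      ((cycleGraph (m + 2)).Adj i j ↔ (j.val = i.val + 1 ∨ (i.val = 0 ∧ j.val + 1 = m + 2))) := by
    intro i j hij
    have hij' : i.val < j.val := hij
    rw [cycleGraph_adj']
    have h1 : (j - i).val = j.val - i.val := Fin.sub_val_of_le hij.le
    have h2 : (i - j).val = m + 2 + i.val - j.val := Fin.coe_sub_iff_lt.2 hij
    rw [h1, h2]
    have := j.isLt
    omega
  refine (h (m + 2) hn).false ⟨⟨fun i => p i, ?_⟩, ?_⟩
  · intro i j hij
    by_contra hc
    rcases lt_or_gt_of_ne hc with hlt | hlt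
    · exact hne i j hlt j.isLt hij
    · exact hne j i hlt i.isLt hij.symm
  · intro i j
    change G.Adj (p i) (p j) ↔ _
    rcases lt_trichotomy i j with hlt | rfl | hlt
    · rw [key i j hlt, hadj i j hlt j.isLt]
    · simp
    · rw [G.adj_comm, (cycleGraph (m + 2)).adj_comm, key j i hlt, hadj j i hlt i.isLt]

theorem HoleFree.c5 (h : HoleFree G) {a b c d e : V} (ab : G.Adj a b) (bc : G.Adj b c)
    (cd : G.Adj c d) (de : G.Adj d e) (ea : G.Adj e a) (ac : ¬ G.Adj a c) (ad : ¬ G.Adj a d)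
    (bd : ¬ G.Adj b d) (be : ¬ G.Adj b e) (ce : ¬ G.Adj c e) : False := by
  let p : ℕ → V := fun i => match i with
    | 0 => a | 1 => b | 2 => c | 3 => d | _ => e
  have hac : a ≠ c := by rintro rfl; exact ad cd
  have had : a ≠ d := by rintro rfl; exact ac cd.symm
  have hbd : b ≠ d := by rintro rfl; exact be de
  have hbe : b ≠ e := by rintro rfl; exact bd de.symm
  have hce : c ≠ e := by rintro rfl; exact be bc
  have h1 := ab.ne; have h2 := bc.ne; have h3 := cd.ne; have h4 := de.ne; have h5 := ea.ne.symm
  have ea' := ea.symm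
  refine h 5 p le_rfl ?_ ?_
  · intro i j hij hj
    interval_cases j <;> interval_cases i <;> assumption
  · intro i j hij hj
    interval_cases j <;> interval_cases i <;> simp [p] <;> assumption

/-! ### Linking two vertices through a connected set -/

/-- `K` induces a connected subgraph (or is empty): any two vertices are joined inside `K`. -/
def Conn (G : SimpleGraph V) (K : Set V) : Prop :=
  ∀ x ∈ K, ∀ y ∈ K, Relation.ReflTransGen (fun a b => b ∈ K ∧ G.Adj a b) x y

theorem Conn.insert {K : Set V} (hK : Conn G K) {q k : V} (hk : k ∈ K) (hq : G.Adj q k) :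
    Conn G (Insert.insert q K) := by
  have lift : ∀ x y, Relation.ReflTransGen (fun a b => b ∈ K ∧ G.Adj a b) x y →
      Relation.ReflTransGen (fun a b => b ∈ Insert.insert q K ∧ G.Adj a b) x y := fun x y h =>
    Relation.ReflTransGen.mono (fun _ _ hab => ⟨Or.inr hab.1, hab.2⟩) _ _ h
  rintro x (rfl | hx) y (rfl | hy)
  · exact .refl
  · exact .head ⟨Or.inr hk, hq⟩ (lift _ _ (hK k hk y hy))
  · exact .tail (lift _ _ (hK x hx k hk)) ⟨Or.inl rfl, hq.symm⟩
  · exact lift _ _ (hK x hx y hy)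

/-- `p 0, …, p m` is a walk from `q` to `c` whose interior lies in `K`. -/
def Link (G : SimpleGraph V) (K : Set V) (q c : V) (m : ℕ) (p : ℕ → V) : Prop :=
  p 0 = q ∧ p m = c ∧ (∀ i < m, G.Adj (p i) (p (i + 1))) ∧ ∀ i, 0 < i → i < m → p i ∈ K

theorem exists_link {K : Set V} (hK : Conn G K) {q c : V} (hq : ∃ k ∈ K, G.Adj q k)
    (hc : ∃ k ∈ K, G.Adj c k) : ∃ m p, Link G K q c m p := by
  obtain ⟨k, hk, hqk⟩ := hq
  obtain ⟨l, hl, hcl⟩ := hc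
  have h : ∃ (m : ℕ) (p : ℕ → V), p 0 = q ∧ p m = l ∧ (∀ i < m, G.Adj (p i) (p (i + 1))) ∧
      ∀ i, 0 < i → i ≤ m → p i ∈ K := by
    have := hK k hk l hl
    clear hcl hl
    induction this with
    | refl =>
      refine ⟨1, fun i => if i = 0 then q else k, by simp, by simp, ?_, ?_⟩
      · intro i hi
        obtain rfl : i = 0 := by omega
        simpa using hqk
      · intro i hi _
        simpa [hi.ne'] using hk
    | @tail b d _ hbd ih =>
      obtain ⟨m, p, h0, hm, ha, hin⟩ := ih
      refine ⟨m + 1, fun i => if i ≤ m then p i else d, by simp [h0], by simp, ?_, ?_⟩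
      · intro i hi
        rcases Nat.lt_succ_iff_lt_or_eq.1 hi with hi | rfl
        · have h1 : i ≤ m := by omega
          have h2 : i + 1 ≤ m := by omega
          simpa [h1, h2] using ha i hi
        · simpa [hm] using hbd.2
      · intro i hi hi'
        by_cases him : i ≤ m
        · simpa [him] using hin i hi him
        · simpa [him] using hbd.1
  obtain ⟨m, p, h0, hm, ha, hin⟩ := h
  refine ⟨m + 1, fun i => if i ≤ m then p i else c, by simp [h0], by simp, ?_, ?_⟩
  · intro i hi
    rcases Nat.lt_succ_iff_lt_or_eq.1 hi with hi | rfl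
    · have h1 : i ≤ m := by omega
      have h2 : i + 1 ≤ m := by omega
      simpa [h1, h2] using ha i hi
    · simpa [hm] using hcl.symm
  · intro i hi hi'
    have him : i ≤ m := by omega
    simpa [him] using hin i hi him

/-- A shortest link is an induced path. -/
theorem exists_induced_link {K : Set V} (hK : Conn G K) {q c : V} (hq : ∃ k ∈ K, G.Adj q k)
    (hc : ∃ k ∈ K, G.Adj c k) : ∃ m p, Link G K q c m p ∧
      (∀ i j, i < j → j ≤ m → p i ≠ p j) ∧
      (∀ i j, i < j → j ≤ m → (G.Adj (p i) (p j) ↔ j = i + 1)) := by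
  classical
  have hex := exists_link hK hq hc
  obtain ⟨p, hp⟩ := Nat.find_spec hex
  have hmin : ∀ m' < Nat.find hex, ∀ p', ¬ Link G K q c m' p' := fun m' hm' p' h' =>
    Nat.find_min hex hm' ⟨p', h'⟩
  generalize Nat.find hex = m at hp hmin
  obtain ⟨h0, hm, ha, hin⟩ := hp
  refine ⟨m, p, ⟨h0, hm, ha, hin⟩, ?_, ?_⟩
  · intro i j hij hj he
    refine hmin (m - (j - i)) (by omega) (fun l => if l ≤ i then p l else p (l + (j - i)))
      ⟨by simp [h0], ?_, ?_, ?_⟩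
    · by_cases h : m - (j - i) ≤ i
      · have h1 : m - (j - i) = i := by omega
        have h2 : j = m := by omega
        simp only [h1, le_refl, if_true]
        rw [he, h2, hm]
      · simp only [h, if_false]
        rw [Nat.sub_add_cancel (by omega), hm]
    · intro l hl
      rcases lt_trichotomy l i with h | rfl | h
      · have h1 : l ≤ i := by omega
        have h2 : l + 1 ≤ i := by omega
        simpa [h1, h2] using ha l (by omega)
      · have e1 : l + 1 + (j - l) = j + 1 := by omega
        simpa [e1, he] using ha j (by omega)
      · have h1 : ¬ l ≤ i := by omega
        have h2 : ¬ l + 1 ≤ i := by omega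
        have e1 : l + 1 + (j - i) = l + (j - i) + 1 := by omega
        simpa [h1, h2, e1] using ha (l + (j - i)) (by omega)
    · intro l hl hl'
      by_cases h : l ≤ i
      · simpa [h] using hin l hl (by omega)
      · simpa [h] using hin (l + (j - i)) (by omega) (by omega)
  · intro i j hij hj
    refine ⟨fun hadj => ?_, fun h => h ▸ ha i (by omega)⟩
    by_contra hne
    refine hmin (m - (j - i - 1)) (by omega)
      (fun l => if l ≤ i then p l else p (l + (j - i - 1))) ⟨by simp [h0], ?_, ?_, ?_⟩
    · have h : ¬ m - (j - i - 1) ≤ i := by omega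
      simp only [h, if_false]
      rw [Nat.sub_add_cancel (by omega), hm]
    · intro l hl
      rcases lt_trichotomy l i with h | rfl | h
      · have h1 : l ≤ i := by omega
        have h2 : l + 1 ≤ i := by omega
        simpa [h1, h2] using ha l (by omega)
      · have e1 : l + 1 + (j - l - 1) = j := by omega
        simpa [e1] using hadj
      · have h1 : ¬ l ≤ i := by omega
        have h2 : ¬ l + 1 ≤ i := by omega
        have e1 : l + 1 + (j - i - 1) = l + (j - i - 1) + 1 := by omega
        simpa [h1, h2, e1] using ha (l + (j - i - 1)) (by omega)
    · intro l hl hl'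
      by_cases h : l ≤ i
      · simpa [h] using hin l hl (by omega)
      · simpa [h] using hin (l + (j - i - 1)) (by omega) (by omega)

/-- Nonadjacent `q`, `c` are joined by an induced path through `K` and by an induced path
`c, w 0, …, w (t - 1), q` whose interior is anticomplete to `K`.  Together they form an induced
cycle, so in a hole-free graph both paths have length two. -/
theorem link_main (hf : HoleFree G) {K : Set V} (hK : Conn G K) {q c : V}
    (hq : ∃ k ∈ K, G.Adj q k) (hc : ∃ k ∈ K, G.Adj c k) (hqc : ¬ G.Adj q c) (hne : q ≠ c)
    (t : ℕ) (ht : 1 ≤ t) (w : ℕ → V)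
    (hwK : ∀ j < t, w j ∉ K ∧ ∀ k ∈ K, ¬ G.Adj k (w j))
    (hww : ∀ i j, i < j → j < t → w i ≠ w j ∧ (G.Adj (w i) (w j) ↔ j = i + 1))
    (hwq : ∀ j < t, q ≠ w j ∧ (G.Adj q (w j) ↔ j + 1 = t))
    (hwc : ∀ j < t, c ≠ w j ∧ (G.Adj c (w j) ↔ j = 0)) :
    t = 1 ∧ ∃ k ∈ K, G.Adj q k ∧ G.Adj c k := by
  obtain ⟨m, p, ⟨h0, hm, ha, hin⟩, hpne, hpadj⟩ := exists_induced_link hK hq hc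
  have hm0 : m ≠ 0 := by rintro rfl; exact hne (h0.symm.trans hm)
  have hm1 : m ≠ 1 := by
    rintro rfl
    have := ha 0 (by omega)
    rw [h0, hm] at this
    exact hqc this
  by_cases hlen : m + t ≤ 3
  · obtain rfl : m = 2 := by omega
    refine ⟨by omega, p 1, hin 1 (by omega) (by omega), ?_, ?_⟩
    · simpa [h0] using ha 0 (by omega)
    · simpa [hm] using (ha 1 (by omega)).symm
  · exfalso
    refine hf (m + 1 + t) (fun i => if i ≤ m then p i else w (i - m - 1)) (by omega) ?_ ?_
    · intro i j hij hj
      by_cases hjm : j ≤ m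
      · have him : i ≤ m := by omega
        simpa [hjm, him] using hpne i j hij hjm
      · by_cases him : i ≤ m
        · simp only [hjm, him, if_true, if_false]
          have hj' : j - m - 1 < t := by omega
          rcases Nat.eq_zero_or_pos i with rfl | hi
          · rw [h0]; exact (hwq _ hj').1
          · rcases Nat.lt_or_ge i m with hi2 | hi2
            · intro he
              exact (hwK _ hj').1 (he ▸ hin i hi hi2)
            · obtain rfl : i = m := by omega
              rw [hm]; exact (hwc _ hj').1
        · simp only [hjm, him, if_false]
          exact (hww _ _ (by omega) (by omega)).1
    · intro i j hij hj
      by_cases hjm : j ≤ m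
      · have him : i ≤ m := by omega
        simp only [hjm, him, if_true]
        rw [hpadj i j hij hjm]
        omega
      · by_cases him : i ≤ m
        · simp only [hjm, him, if_true, if_false]
          have hj' : j - m - 1 < t := by omega
          rcases Nat.eq_zero_or_pos i with rfl | hi
          · rw [h0, (hwq _ hj').2]; omega
          · rcases Nat.lt_or_ge i m with hi2 | hi2
            · have := (hwK _ hj').2 _ (hin i hi hi2)
              simp only [this, false_iff]
              omega
            · obtain rfl : i = m := by omega
              rw [hm, (hwc _ hj').2]; omega
        · simp only [hjm, him, if_false]
          rw [(hww _ _ (show i - m - 1 < j - m - 1 by omega) (by omega)).2]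
          omega

/-- `a` is outside `K` and has no neighbour in `K`. -/
def Off (G : SimpleGraph V) (K : Set V) (a : V) : Prop := a ∉ K ∧ ∀ k ∈ K, ¬ G.Adj k a

/-- `a` is outside `K` and has a neighbour in `K`. -/
def On (G : SimpleGraph V) (K : Set V) (a : V) : Prop := a ∉ K ∧ ∃ k ∈ K, G.Adj a k

/-- Joining `q` and `c` by the path `q, a, c` off `K`: the path through `K` has length two. -/
theorem link2 (hf : HoleFree G) {K : Set V} (hK : Conn G K) {q c a : V}
    (hq : On G K q) (hc : On G K c) (hqc : ¬ G.Adj q c) (hne : q ≠ c)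
    (ha : Off G K a) (qa : G.Adj q a) (ac : G.Adj a c) :
    ∃ k ∈ K, G.Adj q k ∧ G.Adj c k := by
  refine (link_main hf hK hq.2 hc.2 hqc hne 1 le_rfl (fun _ => a) ?_ ?_ ?_ ?_).2
  · intro j _; exact ha
  · intro i j _ _; omega
  · intro j hj; exact ⟨qa.ne, by simp [qa]; omega⟩
  · intro j hj; exact ⟨ac.ne.symm, by simp [ac.symm]; omega⟩

/-- Joining `q` and `c` by the path `q, a, b, c` off `K` gives a hole. -/
theorem link3 (hf : HoleFree G) {K : Set V} (hK : Conn G K) {q c a b : V}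
    (hq : On G K q) (hc : On G K c) (hqc : ¬ G.Adj q c) (hne : q ≠ c)
    (ha : Off G K a) (hb : Off G K b) (qa : G.Adj q a) (ab : G.Adj a b) (bc : G.Adj b c)
    (qb : ¬ G.Adj q b) (ac : ¬ G.Adj a c) : False := by
  have h1 : q ≠ b := by rintro rfl; exact hqc bc
  have h2 : c ≠ a := by rintro rfl; exact hqc qa
  have := (link_main hf hK hq.2 hc.2 hqc hne 2 (by omega)
    (fun i => if i = 0 then b else a) ?_ ?_ ?_ ?_).1
  · omega
  · intro j hj; interval_cases j <;> assumption
  · intro i j hij hj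
    interval_cases j <;> interval_cases i
    exact ⟨ab.ne.symm, by simp [ab.symm]⟩
  · intro j hj; interval_cases j <;> simp [*, qa.ne]
  · intro j hj
    rw [G.adj_comm] at bc ac
    interval_cases j <;> simp [*, bc.ne]

/-- Joining `q` and `c` by the path `q, a, b, d, c` off `K` gives a hole. -/
theorem link4 (hf : HoleFree G) {K : Set V} (hK : Conn G K) {q c a b d : V}
    (hq : On G K q) (hc : On G K c) (hqc : ¬ G.Adj q c) (hne : q ≠ c)
    (ha : Off G K a) (hb : Off G K b) (hd : Off G K d) (qa : G.Adj q a) (ab : G.Adj a b)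
    (bd : G.Adj b d) (dc : G.Adj d c) (qb : ¬ G.Adj q b) (qd : ¬ G.Adj q d) (ad : ¬ G.Adj a d)
    (ac : ¬ G.Adj a c) (bc : ¬ G.Adj b c) : False := by
  have h1 : q ≠ b := by rintro rfl; exact qd bd
  have h2 : q ≠ d := by rintro rfl; exact qb bd.symm
  have h3 : c ≠ a := by rintro rfl; exact bc ab.symm
  have h4 : c ≠ b := by rintro rfl; exact ac ab
  have h5 : d ≠ a := by rintro rfl; exact ac dc
  have := (link_main hf hK hq.2 hc.2 hqc hne 3 (by omega)
    (fun i => if i = 0 then d else if i = 1 then b else a) ?_ ?_ ?_ ?_).1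
  · omega
  · intro j hj; interval_cases j <;> assumption
  · rw [G.adj_comm] at ab bd ad
    intro i j hij hj
    interval_cases j <;> interval_cases i <;> simp [*, ab.ne, bd.ne]
  · intro j hj; interval_cases j <;> simp [*, qa.ne]
  · intro j hj
    rw [G.adj_comm] at dc ac bc
    interval_cases j <;> simp [*, dc.ne]

/-! ### The prism and its neighbours -/

/-- The six vertices induce a complement of `C₆`: triangles `x₁x₂x₃` and `x₄x₅x₆` joined by the
matching `x₁x₄`, `x₂x₅`, `x₃x₆`. -/
structure Prism (G : SimpleGraph V) (x₁ x₂ x₃ x₄ x₅ x₆ : V) : Prop where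
  a12 : G.Adj x₁ x₂
  a13 : G.Adj x₁ x₃
  a23 : G.Adj x₂ x₃
  a45 : G.Adj x₄ x₅
  a46 : G.Adj x₄ x₆
  a56 : G.Adj x₅ x₆
  a14 : G.Adj x₁ x₄
  a25 : G.Adj x₂ x₅
  a36 : G.Adj x₃ x₆
  n15 : ¬ G.Adj x₁ x₅
  n16 : ¬ G.Adj x₁ x₆
  n24 : ¬ G.Adj x₂ x₄
  n26 : ¬ G.Adj x₂ x₆
  n34 : ¬ G.Adj x₃ x₄
  n35 : ¬ G.Adj x₃ x₅

variable {x₁ x₂ x₃ x₄ x₅ x₆ : V}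

theorem Prism.rot (P : Prism G x₁ x₂ x₃ x₄ x₅ x₆) : Prism G x₂ x₃ x₁ x₅ x₆ x₄ :=
  ⟨P.a23, P.a12.symm, P.a13.symm, P.a56, P.a45.symm, P.a46.symm, P.a25, P.a36, P.a14,
    P.n26, P.n24, P.n35, P.n34, P.n15, P.n16⟩

theorem Prism.swap (P : Prism G x₁ x₂ x₃ x₄ x₅ x₆) : Prism G x₂ x₁ x₃ x₅ x₄ x₆ :=
  ⟨P.a12.symm, P.a23, P.a13, P.a45.symm, P.a56, P.a46, P.a25, P.a14, P.a36,
    P.n24, P.n26, P.n15, P.n16, P.n35, P.n34⟩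

theorem Prism.flip (P : Prism G x₁ x₂ x₃ x₄ x₅ x₆) : Prism G x₄ x₅ x₆ x₁ x₂ x₃ :=
  have s := fun {x y : V} (h : ¬ G.Adj x y) (h' : G.Adj y x) => h h'.symm
  ⟨P.a45, P.a46, P.a56, P.a12, P.a13, P.a23, P.a14.symm, P.a25.symm, P.a36.symm,
    s P.n24, s P.n34, s P.n15, s P.n35, s P.n16, s P.n26⟩

/-- The dart with centres `i`, `j`, tips `l`, `q` and pendant `m` at `i`. -/
theorem DartFree.edge (hd : DartFree G) {q i j l m : V} (ij : G.Adj i j) (il : G.Adj i l)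
    (jl : G.Adj j l) (im : G.Adj i m) (jm : ¬ G.Adj j m) (lm : ¬ G.Adj l m) (ql : q ≠ l)
    (qi : G.Adj q i) (qj : G.Adj q j) (nql : ¬ G.Adj q l) : G.Adj q m := by
  by_contra h
  exact hd i j l q m ij il qi.symm jl qj.symm im ql.symm (fun h => nql h.symm) jm lm h

/-- The dart with centres `q`, `a`, tips `b`, `c` and pendant `k` at `q`. -/
theorem DartFree.p3 (hd : DartFree G) {q k a b c : V} (qk : G.Adj q k) (ab : G.Adj a b)
    (ac : G.Adj a c) (bc : ¬ G.Adj b c) (hbc : b ≠ c)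
    (qa : G.Adj q a) (qb : G.Adj q b) (qc : G.Adj q c) :
    G.Adj k a ∨ G.Adj k b ∨ G.Adj k c := by
  by_contra! h
  exact hd q a b c k qa qb qc ab ac qk hbc bc (fun h' => h.1 h'.symm) (fun h' => h.2.1 h'.symm)
    (fun e => h.2.2 e.symm)

/-- The dart with centres `i`, `j`, tips `q`, `r` and pendant `e` at `i`. -/
theorem DartFree.pair (hd : DartFree G) {q r i j e : V} (hqr : q ≠ r) (nqr : ¬ G.Adj q r)
    (ij : G.Adj i j) (ie : G.Adj i e) (je : ¬ G.Adj j e)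
    (qi : G.Adj q i) (qj : G.Adj q j) (ri : G.Adj r i) (rj : G.Adj r j)
    (qe : ¬ G.Adj q e) (re : ¬ G.Adj r e) : False :=
  hd i j q r e ij qi.symm ri.symm qj.symm rj.symm ie hqr nqr je qe re

/-- Distinctness of the nonadjacent vertices of a prism. -/
theorem Prism.ne (P : Prism G x₁ x₂ x₃ x₄ x₅ x₆) :
    x₁ ≠ x₅ ∧ x₁ ≠ x₆ ∧ x₂ ≠ x₄ ∧ x₂ ≠ x₆ ∧ x₃ ≠ x₄ ∧ x₃ ≠ x₅ := by
  refine ⟨?_, ?_, ?_, ?_, ?_, ?_⟩ <;> rintro rfl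
  · exact P.n35 P.a13.symm
  · exact P.n26 P.a12.symm
  · exact P.n34 P.a23.symm
  · exact P.n16 P.a12
  · exact P.n24 P.a23
  · exact P.n15 P.a13

/-- Restrictions on the neighbourhood in the prism of an outside vertex `q`: the first twelve
come from darts (`DartFree.edge`), the last six from induced `C₅`s. -/
def Restr (G : SimpleGraph V) (x₁ x₂ x₃ x₄ x₅ x₆ q : V) : Prop :=
    (G.Adj q x₁ → G.Adj q x₂ → ¬ G.Adj q x₃ → G.Adj q x₄) ∧
    (G.Adj q x₁ → G.Adj q x₃ → ¬ G.Adj q x₂ → G.Adj q x₄) ∧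
    (G.Adj q x₂ → G.Adj q x₁ → ¬ G.Adj q x₃ → G.Adj q x₅) ∧
    (G.Adj q x₂ → G.Adj q x₃ → ¬ G.Adj q x₁ → G.Adj q x₅) ∧
    (G.Adj q x₃ → G.Adj q x₁ → ¬ G.Adj q x₂ → G.Adj q x₆) ∧
    (G.Adj q x₃ → G.Adj q x₂ → ¬ G.Adj q x₁ → G.Adj q x₆) ∧
    (G.Adj q x₄ → G.Adj q x₅ → ¬ G.Adj q x₆ → G.Adj q x₁) ∧
    (G.Adj q x₄ → G.Adj q x₆ → ¬ G.Adj q x₅ → G.Adj q x₁) ∧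
    (G.Adj q x₅ → G.Adj q x₄ → ¬ G.Adj q x₆ → G.Adj q x₂) ∧
    (G.Adj q x₅ → G.Adj q x₆ → ¬ G.Adj q x₄ → G.Adj q x₂) ∧
    (G.Adj q x₆ → G.Adj q x₄ → ¬ G.Adj q x₅ → G.Adj q x₃) ∧
    (G.Adj q x₆ → G.Adj q x₅ → ¬ G.Adj q x₄ → G.Adj q x₃) ∧
    (G.Adj q x₁ → G.Adj q x₅ → G.Adj q x₃ ∨ G.Adj q x₆) ∧
    (G.Adj q x₁ → G.Adj q x₆ → G.Adj q x₂ ∨ G.Adj q x₅) ∧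
    (G.Adj q x₂ → G.Adj q x₄ → G.Adj q x₃ ∨ G.Adj q x₆) ∧
    (G.Adj q x₂ → G.Adj q x₆ → G.Adj q x₁ ∨ G.Adj q x₄) ∧
    (G.Adj q x₃ → G.Adj q x₄ → G.Adj q x₂ ∨ G.Adj q x₅) ∧
    (G.Adj q x₃ → G.Adj q x₅ → G.Adj q x₁ ∨ G.Adj q x₄)

theorem Prism.outside (P : Prism G x₁ x₂ x₃ x₄ x₅ x₆) (hd : DartFree G) (hh : HoleFree G) {q : V}
    (q1 : q ≠ x₁) (q2 : q ≠ x₂) (q3 : q ≠ x₃) (q4 : q ≠ x₄) (q5 : q ≠ x₅) (q6 : q ≠ x₆) :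
    Restr G x₁ x₂ x₃ x₄ x₅ x₆ q := by
  have s := fun {x y : V} (h : ¬ G.Adj x y) (h' : G.Adj y x) => h h'.symm
  have c5 : ∀ {y₁ y₂ y₃ y₄ y₅ y₆ : V}, Prism G y₁ y₂ y₃ y₄ y₅ y₆ →
      G.Adj q y₁ → G.Adj q y₅ → G.Adj q y₃ ∨ G.Adj q y₆ := by
    intro y₁ y₂ y₃ y₄ y₅ y₆ P h1 h5
    by_contra! h
    exact hh.c5 h1 P.a13 P.a36 P.a56.symm h5.symm h.1 h.2 P.n16 P.n15 P.n35
  refine ⟨hd.edge P.a12 P.a13 P.a23 P.a14 P.n24 P.n34 q3,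
    hd.edge P.a13 P.a12 P.a23.symm P.a14 P.n34 P.n24 q2,
    hd.edge P.a12.symm P.a23 P.a13 P.a25 P.n15 P.n35 q3,
    hd.edge P.a23 P.a12.symm P.a13.symm P.a25 P.n35 P.n15 q1,
    hd.edge P.a13.symm P.a23.symm P.a12 P.a36 P.n16 P.n26 q2,
    hd.edge P.a23.symm P.a13.symm P.a12.symm P.a36 P.n26 P.n16 q1,
    hd.edge P.a45 P.a46 P.a56 P.a14.symm (s P.n15) (s P.n16) q6,
    hd.edge P.a46 P.a45 P.a56.symm P.a14.symm (s P.n16) (s P.n15) q5,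
    hd.edge P.a45.symm P.a56 P.a46 P.a25.symm (s P.n24) (s P.n26) q6,
    hd.edge P.a56 P.a45.symm P.a46.symm P.a25.symm (s P.n26) (s P.n24) q4,
    hd.edge P.a46.symm P.a56.symm P.a45 P.a36.symm (s P.n34) (s P.n35) q5,
    hd.edge P.a56.symm P.a46.symm P.a45.symm P.a36.symm (s P.n35) (s P.n34) q4,
    c5 P, c5 P.rot.rot.swap, c5 P.swap, c5 P.rot, c5 P.rot.rot, c5 P.rot.swap⟩

/-- Restrictions coming from a vertex `k` adjacent to `q`: an induced `P₃` of the prism inside the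
neighbourhood of `q` contains a neighbour of `k` (`DartFree.p3`). -/
def RestrAdj (G : SimpleGraph V) (x₁ x₂ x₃ x₄ x₅ x₆ q k : V) : Prop :=
    (G.Adj q x₁ → G.Adj q x₂ → G.Adj q x₄ → G.Adj k x₁ ∨ G.Adj k x₂ ∨ G.Adj k x₄) ∧
    (G.Adj q x₁ → G.Adj q x₃ → G.Adj q x₄ → G.Adj k x₁ ∨ G.Adj k x₃ ∨ G.Adj k x₄) ∧
    (G.Adj q x₂ → G.Adj q x₁ → G.Adj q x₅ → G.Adj k x₂ ∨ G.Adj k x₁ ∨ G.Adj k x₅) ∧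
    (G.Adj q x₂ → G.Adj q x₃ → G.Adj q x₅ → G.Adj k x₂ ∨ G.Adj k x₃ ∨ G.Adj k x₅) ∧
    (G.Adj q x₃ → G.Adj q x₁ → G.Adj q x₆ → G.Adj k x₃ ∨ G.Adj k x₁ ∨ G.Adj k x₆) ∧
    (G.Adj q x₃ → G.Adj q x₂ → G.Adj q x₆ → G.Adj k x₃ ∨ G.Adj k x₂ ∨ G.Adj k x₆) ∧
    (G.Adj q x₄ → G.Adj q x₅ → G.Adj q x₁ → G.Adj k x₄ ∨ G.Adj k x₅ ∨ G.Adj k x₁) ∧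
    (G.Adj q x₄ → G.Adj q x₆ → G.Adj q x₁ → G.Adj k x₄ ∨ G.Adj k x₆ ∨ G.Adj k x₁) ∧
    (G.Adj q x₅ → G.Adj q x₄ → G.Adj q x₂ → G.Adj k x₅ ∨ G.Adj k x₄ ∨ G.Adj k x₂) ∧
    (G.Adj q x₅ → G.Adj q x₆ → G.Adj q x₂ → G.Adj k x₅ ∨ G.Adj k x₆ ∨ G.Adj k x₂) ∧
    (G.Adj q x₆ → G.Adj q x₄ → G.Adj q x₃ → G.Adj k x₆ ∨ G.Adj k x₄ ∨ G.Adj k x₃) ∧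
    (G.Adj q x₆ → G.Adj q x₅ → G.Adj q x₃ → G.Adj k x₆ ∨ G.Adj k x₅ ∨ G.Adj k x₃)

theorem Prism.outside_adj (P : Prism G x₁ x₂ x₃ x₄ x₅ x₆) (hd : DartFree G) {q k : V}
    (qk : G.Adj q k) :
    RestrAdj G x₁ x₂ x₃ x₄ x₅ x₆ q k := by
  have s := fun {x y : V} (h : ¬ G.Adj x y) (h' : G.Adj y x) => h h'.symm
  obtain ⟨n15, n16, n24, n26, n34, n35⟩ := P.ne
  exact ⟨hd.p3 qk P.a12 P.a14 P.n24 n24, hd.p3 qk P.a13 P.a14 P.n34 n34,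
    hd.p3 qk P.a12.symm P.a25 P.n15 n15, hd.p3 qk P.a23 P.a25 P.n35 n35,
    hd.p3 qk P.a13.symm P.a36 P.n16 n16, hd.p3 qk P.a23.symm P.a36 P.n26 n26,
    hd.p3 qk P.a45 P.a14.symm (s P.n15) n15.symm, hd.p3 qk P.a46 P.a14.symm (s P.n16) n16.symm,
    hd.p3 qk P.a45.symm P.a25.symm (s P.n24) n24.symm, hd.p3 qk P.a56 P.a25.symm (s P.n26) n26.symm,
    hd.p3 qk P.a46.symm P.a36.symm (s P.n34) n34.symm,
    hd.p3 qk P.a56.symm P.a36.symm (s P.n35) n35.symm⟩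

/-! ### Maximal connected sets attached to a clique of the prism -/

/-- Some vertex of `K` is adjacent to `x`. -/
def Touch (G : SimpleGraph V) (K : Set V) (x : V) : Prop := ∃ k ∈ K, G.Adj x k

/-- `q` lies outside `K` and the prism, and has a neighbour in `K`. -/
structure Outer (G : SimpleGraph V) (K : Set V) (x₁ x₂ x₃ x₄ x₅ x₆ q : V) : Prop where
  on : On G K q
  q1 : q ≠ x₁
  q2 : q ≠ x₂
  q3 : q ≠ x₃
  q4 : q ≠ x₄
  q5 : q ≠ x₅
  q6 : q ≠ x₆

/-- `K` is connected, disjoint from the prism, its neighbours in the prism form a clique, and no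
vertex of `K` is complete to a triangle of the prism; moreover `K` is maximal in the sense that
adding any outside neighbour of `K` breaks one of the last two conditions. -/
structure Cfg (G : SimpleGraph V) (K : Set V) (x₁ x₂ x₃ x₄ x₅ x₆ : V) : Prop where
  dart : DartFree G
  hole : HoleFree G
  prism : Prism G x₁ x₂ x₃ x₄ x₅ x₆
  conn : Conn G K
  o1 : x₁ ∉ K
  o2 : x₂ ∉ K
  o3 : x₃ ∉ K
  o4 : x₄ ∉ K
  o5 : x₅ ∉ K
  o6 : x₆ ∉ K
  t15 : ¬ (Touch G K x₁ ∧ Touch G K x₅)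
  t16 : ¬ (Touch G K x₁ ∧ Touch G K x₆)
  t24 : ¬ (Touch G K x₂ ∧ Touch G K x₄)
  t26 : ¬ (Touch G K x₂ ∧ Touch G K x₆)
  t34 : ¬ (Touch G K x₃ ∧ Touch G K x₄)
  t35 : ¬ (Touch G K x₃ ∧ Touch G K x₅)
  tri : ∀ k ∈ K, ¬ (G.Adj k x₁ ∧ G.Adj k x₂ ∧ G.Adj k x₃)
  tri' : ∀ k ∈ K, ¬ (G.Adj k x₄ ∧ G.Adj k x₅ ∧ G.Adj k x₆)
  max : ∀ q, Outer G K x₁ x₂ x₃ x₄ x₅ x₆ q →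
    (G.Adj q x₁ ∧ G.Adj q x₂ ∧ G.Adj q x₃) ∨ (G.Adj q x₄ ∧ G.Adj q x₅ ∧ G.Adj q x₆) ∨
    ((Touch G K x₁ ∨ G.Adj q x₁) ∧ (Touch G K x₅ ∨ G.Adj q x₅)) ∨
    ((Touch G K x₁ ∨ G.Adj q x₁) ∧ (Touch G K x₆ ∨ G.Adj q x₆)) ∨
    ((Touch G K x₂ ∨ G.Adj q x₂) ∧ (Touch G K x₄ ∨ G.Adj q x₄)) ∨
    ((Touch G K x₂ ∨ G.Adj q x₂) ∧ (Touch G K x₆ ∨ G.Adj q x₆)) ∨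
    ((Touch G K x₃ ∨ G.Adj q x₃) ∧ (Touch G K x₄ ∨ G.Adj q x₄)) ∨
    ((Touch G K x₃ ∨ G.Adj q x₃) ∧ (Touch G K x₅ ∨ G.Adj q x₅))

variable {K : Set V}

theorem Outer.rot {q : V} (h : Outer G K x₁ x₂ x₃ x₄ x₅ x₆ q) : Outer G K x₂ x₃ x₁ x₅ x₆ x₄ q :=
  ⟨h.on, h.q2, h.q3, h.q1, h.q5, h.q6, h.q4⟩

theorem Outer.swap {q : V} (h : Outer G K x₁ x₂ x₃ x₄ x₅ x₆ q) : Outer G K x₂ x₁ x₃ x₅ x₄ x₆ q :=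
  ⟨h.on, h.q2, h.q1, h.q3, h.q5, h.q4, h.q6⟩

theorem Outer.flip {q : V} (h : Outer G K x₁ x₂ x₃ x₄ x₅ x₆ q) : Outer G K x₄ x₅ x₆ x₁ x₂ x₃ q :=
  ⟨h.on, h.q4, h.q5, h.q6, h.q1, h.q2, h.q3⟩

theorem Cfg.rot (h : Cfg G K x₁ x₂ x₃ x₄ x₅ x₆) : Cfg G K x₂ x₃ x₁ x₅ x₆ x₄ where
  dart := h.dart
  hole := h.hole
  prism := h.prism.rot
  conn := h.conn
  o1 := h.o2
  o2 := h.o3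
  o3 := h.o1
  o4 := h.o5
  o5 := h.o6
  o6 := h.o4
  t15 := h.t26
  t16 := h.t24
  t24 := h.t35
  t26 := h.t34
  t34 := h.t15
  t35 := h.t16
  tri k hk := by have := h.tri k hk; tauto
  tri' k hk := by have := h.tri' k hk; tauto
  max q hq := by have := h.max q hq.rot.rot; grind

theorem Cfg.swap (h : Cfg G K x₁ x₂ x₃ x₄ x₅ x₆) : Cfg G K x₂ x₁ x₃ x₅ x₄ x₆ where
  dart := h.dart
  hole := h.hole
  prism := h.prism.swap
  conn := h.conn
  o1 := h.o2
  o2 := h.o1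
  o3 := h.o3
  o4 := h.o5
  o5 := h.o4
  o6 := h.o6
  t15 := h.t24
  t16 := h.t26
  t24 := h.t15
  t26 := h.t16
  t34 := h.t35
  t35 := h.t34
  tri k hk := by have := h.tri k hk; tauto
  tri' k hk := by have := h.tri' k hk; tauto
  max q hq := by have := h.max q hq.swap; grind

theorem Cfg.flip (h : Cfg G K x₁ x₂ x₃ x₄ x₅ x₆) : Cfg G K x₄ x₅ x₆ x₁ x₂ x₃ where
  dart := h.dart
  hole := h.hole
  prism := h.prism.flip
  conn := h.conn
  o1 := h.o4
  o2 := h.o5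
  o3 := h.o6
  o4 := h.o1
  o5 := h.o2
  o6 := h.o3
  t15 := fun h' => h.t24 h'.symm
  t16 := fun h' => h.t34 h'.symm
  t24 := fun h' => h.t15 h'.symm
  t26 := fun h' => h.t35 h'.symm
  t34 := fun h' => h.t16 h'.symm
  t35 := fun h' => h.t26 h'.symm
  tri := h.tri'
  tri' := h.tri
  max q hq := by have := h.max q hq.flip; grind

theorem off_of_not_touch {x : V} (h : x ∉ K) (ht : ¬ Touch G K x) : Off G K x :=
  ⟨h, fun k hk hkx => ht ⟨k, hk, hkx.symm⟩⟩

theorem on_of_touch {x : V} (h : x ∉ K) (ht : Touch G K x) : On G K x := ⟨h, ht⟩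

theorem Touch.of_adj {k x : V} (hk : k ∈ K) (h : G.Adj k x) : Touch G K x := ⟨k, hk, h.symm⟩

theorem Cfg.outside (h : Cfg G K x₁ x₂ x₃ x₄ x₅ x₆) {q : V} (hq : Outer G K x₁ x₂ x₃ x₄ x₅ x₆ q) :
    Restr G x₁ x₂ x₃ x₄ x₅ x₆ q :=
  h.prism.outside h.dart h.hole hq.q1 hq.q2 hq.q3 hq.q4 hq.q5 hq.q6

theorem Cfg.inside (h : Cfg G K x₁ x₂ x₃ x₄ x₅ x₆) {k : V} (hk : k ∈ K) :
    Restr G x₁ x₂ x₃ x₄ x₅ x₆ k :=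
  h.prism.outside h.dart h.hole (q := k) (ne_of_mem_of_not_mem hk h.o1)
    (ne_of_mem_of_not_mem hk h.o2) (ne_of_mem_of_not_mem hk h.o3) (ne_of_mem_of_not_mem hk h.o4)
    (ne_of_mem_of_not_mem hk h.o5) (ne_of_mem_of_not_mem hk h.o6)

/-! ### The neighbourhood of `K` is a clique -/

/-- Every outer vertex is adjacent to all prism vertices that touch `K`, and the outer vertices
are pairwise adjacent. -/
def Good (G : SimpleGraph V) (K : Set V) (x₁ x₂ x₃ x₄ x₅ x₆ : V) : Prop :=
  (∀ q, Outer G K x₁ x₂ x₃ x₄ x₅ x₆ q →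
    (Touch G K x₁ → G.Adj q x₁) ∧ (Touch G K x₂ → G.Adj q x₂) ∧ (Touch G K x₃ → G.Adj q x₃) ∧
    (Touch G K x₄ → G.Adj q x₄) ∧ (Touch G K x₅ → G.Adj q x₅) ∧ (Touch G K x₆ → G.Adj q x₆)) ∧
  ∀ q r, Outer G K x₁ x₂ x₃ x₄ x₅ x₆ q → Outer G K x₁ x₂ x₃ x₄ x₅ x₆ r → q ≠ r → G.Adj q r

theorem Good.rot (h : Good G K x₁ x₂ x₃ x₄ x₅ x₆) : Good G K x₂ x₃ x₁ x₅ x₆ x₄ :=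
  ⟨fun q hq => by have := h.1 q hq.rot.rot; tauto,
    fun q r hq hr => h.2 q r hq.rot.rot hr.rot.rot⟩

theorem Good.swap (h : Good G K x₁ x₂ x₃ x₄ x₅ x₆) : Good G K x₂ x₁ x₃ x₅ x₄ x₆ :=
  ⟨fun q hq => by have := h.1 q hq.swap; tauto, fun q r hq hr => h.2 q r hq.swap hr.swap⟩

theorem Good.flip (h : Good G K x₁ x₂ x₃ x₄ x₅ x₆) : Good G K x₄ x₅ x₆ x₁ x₂ x₃ :=
  ⟨fun q hq => by have := h.1 q hq.flip; tauto, fun q r hq hr => h.2 q r hq.flip hr.flip⟩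

/-! In the following lemmas `T` is the set of prism vertices touching `K`. -/

/-- `T = ∅`: an outer vertex is complete to one triangle and anticomplete to the other. -/
theorem Cfg.good_empty (h : Cfg G K x₁ x₂ x₃ x₄ x₅ x₆) (t1 : ¬ Touch G K x₁)
    (t2 : ¬ Touch G K x₂) (t3 : ¬ Touch G K x₃) (t4 : ¬ Touch G K x₄) (t5 : ¬ Touch G K x₅)
    (t6 : ¬ Touch G K x₆) : Good G K x₁ x₂ x₃ x₄ x₅ x₆ := by
  have P := h.prism
  have key : ∀ q, Outer G K x₁ x₂ x₃ x₄ x₅ x₆ q →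
      (G.Adj q x₁ ∧ G.Adj q x₂ ∧ G.Adj q x₃ ∧ ¬ G.Adj q x₄ ∧ ¬ G.Adj q x₅ ∧ ¬ G.Adj q x₆) ∨
      (¬ G.Adj q x₁ ∧ ¬ G.Adj q x₂ ∧ ¬ G.Adj q x₃ ∧ G.Adj q x₄ ∧ G.Adj q x₅ ∧ G.Adj q x₆) := by
    intro q hq
    obtain ⟨k, hk, qk⟩ := hq.on.2
    have U := h.outside hq
    have W := P.outside_adj h.dart qk
    have M := h.max q hq
    have k1 := mt (Touch.of_adj hk) t1
    have k2 := mt (Touch.of_adj hk) t2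
    have k3 := mt (Touch.of_adj hk) t3
    have k4 := mt (Touch.of_adj hk) t4
    have k5 := mt (Touch.of_adj hk) t5
    have k6 := mt (Touch.of_adj hk) t6
    unfold Restr at U
    unfold RestrAdj at W
    grind (splits := 40) +splitImp only
  refine ⟨fun q _ => by tauto, fun q r hq hr hne => ?_⟩
  by_contra hqr
  have o1 := off_of_not_touch h.o1 t1
  have o4 := off_of_not_touch h.o4 t4
  rcases key q hq with ⟨a1, a2, a3, a4, a5, a6⟩ | ⟨a1, a2, a3, a4, a5, a6⟩ <;>
    rcases key r hr with ⟨b1, b2, b3, b4, b5, b6⟩ | ⟨b1, b2, b3, b4, b5, b6⟩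
  · exact h.dart.pair hne hqr P.a12 P.a14 P.n24 a1 a2 b1 b2 a4 b4
  · exact link3 h.hole h.conn hq.on hr.on hqr hne o1 o4 a1 P.a14 b4.symm a4 fun h => b1 h.symm
  · exact link3 h.hole h.conn hq.on hr.on hqr hne o4 o1 a4 P.a14.symm b1.symm a1
      fun h => b4 h.symm
  · exact h.dart.pair hne hqr P.a45 P.a14.symm (fun h => P.n15 h.symm) a4 a5 b4 b5 a1 b1

/-- `T = {x₁}`: an outer vertex is adjacent to `x₁, x₂, x₃` and not to `x₅`. -/
theorem Cfg.good_one (h : Cfg G K x₁ x₂ x₃ x₄ x₅ x₆) (t1 : Touch G K x₁)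
    (t2 : ¬ Touch G K x₂) (t3 : ¬ Touch G K x₃) (t4 : ¬ Touch G K x₄) (t5 : ¬ Touch G K x₅)
    (t6 : ¬ Touch G K x₆) : Good G K x₁ x₂ x₃ x₄ x₅ x₆ := by
  have P := h.prism
  have o1 := on_of_touch h.o1 t1
  have o2 := off_of_not_touch h.o2 t2
  have o3 := off_of_not_touch h.o3 t3
  have o4 := off_of_not_touch h.o4 t4
  have o5 := off_of_not_touch h.o5 t5
  have o6 := off_of_not_touch h.o6 t6
  have key : ∀ q, Outer G K x₁ x₂ x₃ x₄ x₅ x₆ q →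
      G.Adj q x₁ ∧ G.Adj q x₂ ∧ G.Adj q x₃ ∧ ¬ G.Adj q x₅ := by
    intro q hq
    have U := h.outside hq
    have M := h.max q hq
    unfold Restr at U
    have q1 : G.Adj q x₁ := by
      by_contra q1
      have l52 : G.Adj q x₅ → G.Adj q x₂ := fun q5 => by
        by_contra q2
        exact link3 h.hole h.conn hq.on o1 q1 hq.q1 o5 o2 q5 P.a25.symm P.a12.symm q2
          fun h => P.n15 h.symm
      have l54 : G.Adj q x₅ → G.Adj q x₄ := fun q5 => by
        by_contra q4
        exact link3 h.hole h.conn hq.on o1 q1 hq.q1 o5 o4 q5 P.a45.symm P.a14.symm q4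
          fun h => P.n15 h.symm
      have l63 : G.Adj q x₆ → G.Adj q x₃ := fun q6 => by
        by_contra q3
        exact link3 h.hole h.conn hq.on o1 q1 hq.q1 o6 o3 q6 P.a36.symm P.a13.symm q3
          fun h => P.n16 h.symm
      have l64 : G.Adj q x₆ → G.Adj q x₄ := fun q6 => by
        by_contra q4
        exact link3 h.hole h.conn hq.on o1 q1 hq.q1 o6 o4 q6 P.a46.symm P.a14.symm q4
          fun h => P.n16 h.symm
      have l2 : G.Adj q x₂ ∨ G.Adj q x₃ ∨ G.Adj q x₄ → ∃ k ∈ K, G.Adj q k ∧ G.Adj x₁ k := by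
        rintro (q2 | q3 | q4)
        · exact link2 h.hole h.conn hq.on o1 q1 hq.q1 o2 q2 P.a12.symm
        · exact link2 h.hole h.conn hq.on o1 q1 hq.q1 o3 q3 P.a13.symm
        · exact link2 h.hole h.conn hq.on o1 q1 hq.q1 o4 q4 P.a14.symm
      obtain ⟨k, hk, qk, -⟩ := l2 (by clear l2; grind (splits := 40) +splitImp only)
      have W := P.outside_adj h.dart qk
      have k2 := mt (Touch.of_adj hk) t2
      have k3 := mt (Touch.of_adj hk) t3
      have k4 := mt (Touch.of_adj hk) t4
      have k5 := mt (Touch.of_adj hk) t5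
      have k6 := mt (Touch.of_adj hk) t6
      unfold RestrAdj at W
      grind (splits := 40) +splitImp only
    obtain ⟨k, hk, qk⟩ := hq.on.2
    have W := P.outside_adj h.dart qk
    have k2 := mt (Touch.of_adj hk) t2
    have k3 := mt (Touch.of_adj hk) t3
    have k4 := mt (Touch.of_adj hk) t4
    have k5 := mt (Touch.of_adj hk) t5
    have k6 := mt (Touch.of_adj hk) t6
    unfold RestrAdj at W
    -- The dart with centres `x₁`, `q`, tips `k`, `y` and pendant `z` at `x₁`.
    have d : ∀ y z, ¬ Touch G K y → ¬ Touch G K z → y ∉ K → G.Adj x₁ y → G.Adj x₁ z →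
        ¬ G.Adj y z → G.Adj k x₁ → G.Adj q y → G.Adj q z := by
      intro y z ty tz hy xy xz yz kx qy
      by_contra qz
      exact h.dart x₁ q k y z q1.symm kx.symm xy qk qy xz (ne_of_mem_of_not_mem hk hy)
        (mt (Touch.of_adj hk) ty) qz (mt (Touch.of_adj hk) tz) yz
    have d24 := d x₂ x₄ t2 t4 h.o2 P.a12 P.a14 P.n24
    have d34 := d x₃ x₄ t3 t4 h.o3 P.a13 P.a14 P.n34
    have d42 := d x₄ x₂ t4 t2 h.o4 P.a14 P.a12 fun h => P.n24 h.symm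
    have d43 := d x₄ x₃ t4 t3 h.o4 P.a14 P.a13 fun h => P.n34 h.symm
    by_cases k1 : G.Adj k x₁ <;> grind (splits := 40) +splitImp only
  refine ⟨fun q hq => by have := key q hq; tauto, fun q r hq hr hne => ?_⟩
  by_contra hqr
  obtain ⟨-, a2, a3, a5⟩ := key q hq
  obtain ⟨-, b2, b3, b5⟩ := key r hr
  exact h.dart.pair hne hqr P.a23 P.a25 P.n35 a2 a3 b2 b3 a5 b5

/-- `T = {x₁, x₂}`: an outer vertex is adjacent to `x₁, x₂, x₃` and not to `x₆`. -/
theorem Cfg.good_edge (h : Cfg G K x₁ x₂ x₃ x₄ x₅ x₆) (t1 : Touch G K x₁)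
    (t2 : Touch G K x₂) (t3 : ¬ Touch G K x₃) (t4 : ¬ Touch G K x₄) (t5 : ¬ Touch G K x₅)
    (t6 : ¬ Touch G K x₆) : Good G K x₁ x₂ x₃ x₄ x₅ x₆ := by
  -- An outer vertex is adjacent to `x₁`; by symmetry it is adjacent to `x₂`.
  have adj1 : ∀ {x₁ x₂ x₃ x₄ x₅ x₆ : V}, Cfg G K x₁ x₂ x₃ x₄ x₅ x₆ → Touch G K x₁ →
      Touch G K x₂ → ¬ Touch G K x₃ → ¬ Touch G K x₄ → ¬ Touch G K x₅ → ¬ Touch G K x₆ →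
      ∀ q, Outer G K x₁ x₂ x₃ x₄ x₅ x₆ q → G.Adj q x₁ := by
    intro x₁ x₂ x₃ x₄ x₅ x₆ h t1 t2 t3 t4 t5 t6 q hq
    have P := h.prism
    have o1 := on_of_touch h.o1 t1
    have o2 := on_of_touch h.o2 t2
    have o3 := off_of_not_touch h.o3 t3
    have o4 := off_of_not_touch h.o4 t4
    have o5 := off_of_not_touch h.o5 t5
    have o6 := off_of_not_touch h.o6 t6
    have U := h.outside hq
    have M := h.max q hq
    unfold Restr at U
    by_contra q1
    have l54 : G.Adj q x₅ → G.Adj q x₄ := fun q5 => by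
      by_contra q4
      exact link3 h.hole h.conn hq.on o1 q1 hq.q1 o5 o4 q5 P.a45.symm P.a14.symm q4
        fun h => P.n15 h.symm
    have l63 : G.Adj q x₆ → G.Adj q x₃ := fun q6 => by
      by_contra q3
      exact link3 h.hole h.conn hq.on o1 q1 hq.q1 o6 o3 q6 P.a36.symm P.a13.symm q3
        fun h => P.n16 h.symm
    have l64 : G.Adj q x₆ → G.Adj q x₄ := fun q6 => by
      by_contra q4
      exact link3 h.hole h.conn hq.on o1 q1 hq.q1 o6 o4 q6 P.a46.symm P.a14.symm q4
        fun h => P.n16 h.symm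
    have l45 : ¬ G.Adj q x₂ → G.Adj q x₄ → G.Adj q x₅ := fun q2 q4 => by
      by_contra q5
      exact link3 h.hole h.conn hq.on o2 q2 hq.q2 o4 o5 q4 P.a45 P.a25.symm q5 fun h => P.n24 h.symm
    have q4 : G.Adj q x₄ := by grind (splits := 40) +splitImp only
    obtain ⟨k, hk, qk, k1⟩ := link2 h.hole h.conn hq.on o1 q1 hq.q1 o4 q4 P.a14.symm
    have W := P.outside_adj h.dart qk
    have U' := h.inside hk
    have k1 := k1.symm
    have k3 := mt (Touch.of_adj hk) t3
    have k4 := mt (Touch.of_adj hk) t4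
    have k5 := mt (Touch.of_adj hk) t5
    have k6 := mt (Touch.of_adj hk) t6
    unfold RestrAdj at W
    unfold Restr at U'
    grind (splits := 40) +splitImp only
  have P := h.prism
  have key : ∀ q, Outer G K x₁ x₂ x₃ x₄ x₅ x₆ q →
      G.Adj q x₁ ∧ G.Adj q x₂ ∧ G.Adj q x₃ ∧ ¬ G.Adj q x₆ := by
    intro q hq
    have U := h.outside hq
    have M := h.max q hq
    have q1 := adj1 h t1 t2 t3 t4 t5 t6 q hq
    have q2 := adj1 h.swap t2 t1 t3 t5 t4 t6 q hq.swap
    obtain ⟨k, hk, qk⟩ := hq.on.2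
    have W := P.outside_adj h.dart qk
    have U' := h.inside hk
    have k3 := mt (Touch.of_adj hk) t3
    have k4 := mt (Touch.of_adj hk) t4
    have k5 := mt (Touch.of_adj hk) t5
    have k6 := mt (Touch.of_adj hk) t6
    unfold RestrAdj at W
    unfold Restr at U U'
    grind (splits := 40) +splitImp only
  refine ⟨fun q hq => by have := key q hq; tauto, fun q r hq hr hne => ?_⟩
  by_contra hqr
  obtain ⟨a1, -, a3, a6⟩ := key q hq
  obtain ⟨b1, -, b3, b6⟩ := key r hr
  exact h.dart.pair hne hqr P.a13.symm P.a36 P.n16 a3 a1 b3 b1 a6 b6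

/-- If `K` touches exactly the matching edge `x₁x₄`, outer vertices are adjacent to `x₁`; by
symmetry they are adjacent to `x₄`. -/
theorem Cfg.matching_adj (h : Cfg G K x₁ x₂ x₃ x₄ x₅ x₆) (t1 : Touch G K x₁)
    (t2 : ¬ Touch G K x₂) (t3 : ¬ Touch G K x₃) (t4 : Touch G K x₄) (t5 : ¬ Touch G K x₅)
    (t6 : ¬ Touch G K x₆) {q : V} (hq : Outer G K x₁ x₂ x₃ x₄ x₅ x₆ q) : G.Adj q x₁ := by
  have P := h.prism
  have o1 := on_of_touch h.o1 t1
  have o4 := on_of_touch h.o4 t4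
  have o2 := off_of_not_touch h.o2 t2
  have o3 := off_of_not_touch h.o3 t3
  have o5 := off_of_not_touch h.o5 t5
  have o6 := off_of_not_touch h.o6 t6
  have U := h.outside hq
  have M := h.max q hq
  unfold Restr at U
  by_contra q1
  have l52 : G.Adj q x₅ → G.Adj q x₂ := fun q5 => by
    by_contra q2
    exact link3 h.hole h.conn hq.on o1 q1 hq.q1 o5 o2 q5 P.a25.symm P.a12.symm q2
      fun h => P.n15 h.symm
  have l63 : G.Adj q x₆ → G.Adj q x₃ := fun q6 => by
    by_contra q3
    exact link3 h.hole h.conn hq.on o1 q1 hq.q1 o6 o3 q6 P.a36.symm P.a13.symm q3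
      fun h => P.n16 h.symm
  have l563 : G.Adj q x₅ → G.Adj q x₆ ∨ G.Adj q x₃ := fun q5 => by
    by_contra! q63
    exact link4 h.hole h.conn hq.on o1 q1 hq.q1 o5 o6 o3 q5 P.a56 P.a36.symm P.a13.symm
      q63.1 q63.2 (fun h => P.n35 h.symm) (fun h => P.n15 h.symm) fun h => P.n16 h.symm
  have l652 : G.Adj q x₆ → G.Adj q x₅ ∨ G.Adj q x₂ := fun q6 => by
    by_contra! q52
    exact link4 h.hole h.conn hq.on o1 q1 hq.q1 o6 o5 o2 q6 P.a56.symm P.a25.symm P.a12.symm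
      q52.1 q52.2 (fun h => P.n26 h.symm) (fun h => P.n16 h.symm) fun h => P.n15 h.symm
  have l25 : ¬ G.Adj q x₄ → G.Adj q x₂ → G.Adj q x₅ := fun q4 q2 => by
    by_contra q5
    exact link3 h.hole h.conn hq.on o4 q4 hq.q4 o2 o5 q2 P.a25 P.a45.symm q5 P.n24
  have l36 : ¬ G.Adj q x₄ → G.Adj q x₃ → G.Adj q x₆ := fun q4 q3 => by
    by_contra q6
    exact link3 h.hole h.conn hq.on o4 q4 hq.q4 o3 o6 q3 P.a36 P.a46.symm q6 P.n34
  have q23 : G.Adj q x₂ ∨ G.Adj q x₃ := by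
    clear l25 l36
    grind (splits := 40) +splitImp only
  obtain ⟨k, hk, qk⟩ := hq.on.2
  have k2 := mt (Touch.of_adj hk) t2
  have k3 := mt (Touch.of_adj hk) t3
  have k5 := mt (Touch.of_adj hk) t5
  have k6 := mt (Touch.of_adj hk) t6
  -- An induced `P₃` on `x₂, x₃, x₅, x₆` inside the neighbourhood of `q` gives a dart.
  have np3 : ∀ {a b c : V}, G.Adj a b → G.Adj a c → ¬ G.Adj b c → b ≠ c → ¬ G.Adj k a →
      ¬ G.Adj k b → ¬ G.Adj k c → ¬ (G.Adj q a ∧ G.Adj q b ∧ G.Adj q c) := by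
    intro a b c ab ac bc ne ka kb kc ⟨qa, qb, qc⟩
    exact (h.dart.p3 qk ab ac bc ne qa qb qc).elim ka fun h => h.elim kb kc
  obtain ⟨-, -, -, ne26, -, ne35⟩ := P.ne
  have p1 := np3 P.a23 P.a25 P.n35 ne35 k2 k3 k5
  have p2 := np3 P.a23.symm P.a36 P.n26 ne26 k3 k2 k6
  have p3 := np3 P.a25.symm P.a56 P.n26 ne26 k5 k2 k6
  have p4 := np3 P.a36.symm P.a56.symm P.n35 ne35 k6 k3 k5
  have q5 : ¬ G.Adj q x₅ := fun q5 => by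
    rcases l563 q5 with q6 | q3
    · exact p3 ⟨q5, l52 q5, q6⟩
    · exact p1 ⟨l52 q5, q3, q5⟩
  have q6 : ¬ G.Adj q x₆ := fun q6 => by
    rcases l652 q6 with h5 | q2
    · exact q5 h5
    · exact p2 ⟨l63 q6, q2, q6⟩
  clear M
  have q4 : G.Adj q x₄ := by grind (splits := 20) +splitImp only
  obtain ⟨-, -, -, u23, -, -, -, -, -, -, -, -, -, -, u24, -, u34, -⟩ := U
  grind (splits := 20) +splitImp only

/-- `T = {x₁, x₄}`: an outer vertex is adjacent to `x₁, x₄` and to exactly the ends of one edge of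
the four-cycle `x₂x₃x₆x₅`. -/
theorem Cfg.good_matching (h : Cfg G K x₁ x₂ x₃ x₄ x₅ x₆) (t1 : Touch G K x₁)
    (t2 : ¬ Touch G K x₂) (t3 : ¬ Touch G K x₃) (t4 : Touch G K x₄) (t5 : ¬ Touch G K x₅)
    (t6 : ¬ Touch G K x₆) : Good G K x₁ x₂ x₃ x₄ x₅ x₆ := by
  have P := h.prism
  have o2 := off_of_not_touch h.o2 t2
  have o3 := off_of_not_touch h.o3 t3
  have o5 := off_of_not_touch h.o5 t5
  have o6 := off_of_not_touch h.o6 t6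
  have key : ∀ q, Outer G K x₁ x₂ x₃ x₄ x₅ x₆ q → (G.Adj q x₁ ∧ G.Adj q x₄) ∧
      ((G.Adj q x₂ ∧ G.Adj q x₃ ∧ ¬ G.Adj q x₅ ∧ ¬ G.Adj q x₆) ∨
       (¬ G.Adj q x₂ ∧ ¬ G.Adj q x₃ ∧ G.Adj q x₅ ∧ G.Adj q x₆) ∨
       (G.Adj q x₂ ∧ ¬ G.Adj q x₃ ∧ G.Adj q x₅ ∧ ¬ G.Adj q x₆) ∨
       (¬ G.Adj q x₂ ∧ G.Adj q x₃ ∧ ¬ G.Adj q x₅ ∧ G.Adj q x₆)) := by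
    intro q hq
    have U := h.outside hq
    have M := h.max q hq
    have q1 := h.matching_adj t1 t2 t3 t4 t5 t6 hq
    have q4 := h.flip.matching_adj t4 t5 t6 t1 t2 t3 hq.flip
    obtain ⟨k, hk, qk⟩ := hq.on.2
    have k2 := mt (Touch.of_adj hk) t2
    have k3 := mt (Touch.of_adj hk) t3
    have k5 := mt (Touch.of_adj hk) t5
    have k6 := mt (Touch.of_adj hk) t6
    obtain ⟨-, -, -, ne26, -, ne35⟩ := P.ne
    have np3 : ∀ {a b c : V}, G.Adj a b → G.Adj a c → ¬ G.Adj b c → b ≠ c → ¬ G.Adj k a →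
        ¬ G.Adj k b → ¬ G.Adj k c → ¬ (G.Adj q a ∧ G.Adj q b ∧ G.Adj q c) := by
      intro a b c ab ac bc ne ka kb kc ⟨qa, qb, qc⟩
      exact (h.dart.p3 qk ab ac bc ne qa qb qc).elim ka fun h => h.elim kb kc
    have p1 := np3 P.a23 P.a25 P.n35 ne35 k2 k3 k5
    have p2 := np3 P.a23.symm P.a36 P.n26 ne26 k3 k2 k6
    have p3 := np3 P.a25.symm P.a56 P.n26 ne26 k5 k2 k6
    have p4 := np3 P.a36.symm P.a56.symm P.n35 ne35 k6 k3 k5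
    unfold Restr at U
    clear np3
    refine ⟨⟨q1, q4⟩, ?_⟩
    grind (splits := 40) +splitImp only
  refine ⟨fun q hq => by have := key q hq; tauto, fun q r hq hr hne => ?_⟩
  by_contra hqr
  obtain ⟨⟨a1, a4⟩, a⟩ := key q hq
  obtain ⟨⟨b1, b4⟩, b⟩ := key r hr
  -- The vertices `q` and `r` see different edges of the four-cycle; a path along it joins them.
  have mix : ∀ q r, Outer G K x₁ x₂ x₃ x₄ x₅ x₆ q → Outer G K x₁ x₂ x₃ x₄ x₅ x₆ r → q ≠ r →
      ¬ G.Adj q r →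
      ¬ ((G.Adj q x₂ ∧ G.Adj q x₃ ∧ ¬ G.Adj q x₅ ∧ ¬ G.Adj q x₆) ∧
        (¬ G.Adj r x₂ ∧ ¬ G.Adj r x₃ ∧ G.Adj r x₅ ∧ G.Adj r x₆)) ∧
      ¬ ((G.Adj q x₂ ∧ G.Adj q x₃ ∧ ¬ G.Adj q x₅ ∧ ¬ G.Adj q x₆) ∧
        (G.Adj r x₂ ∧ ¬ G.Adj r x₃ ∧ G.Adj r x₅ ∧ ¬ G.Adj r x₆)) ∧
      ¬ ((G.Adj q x₂ ∧ G.Adj q x₃ ∧ ¬ G.Adj q x₅ ∧ ¬ G.Adj q x₆) ∧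
        (¬ G.Adj r x₂ ∧ G.Adj r x₃ ∧ ¬ G.Adj r x₅ ∧ G.Adj r x₆)) ∧
      ¬ ((¬ G.Adj q x₂ ∧ ¬ G.Adj q x₃ ∧ G.Adj q x₅ ∧ G.Adj q x₆) ∧
        (G.Adj r x₂ ∧ ¬ G.Adj r x₃ ∧ G.Adj r x₅ ∧ ¬ G.Adj r x₆)) ∧
      ¬ ((¬ G.Adj q x₂ ∧ ¬ G.Adj q x₃ ∧ G.Adj q x₅ ∧ G.Adj q x₆) ∧
        (¬ G.Adj r x₂ ∧ G.Adj r x₃ ∧ ¬ G.Adj r x₅ ∧ G.Adj r x₆)) ∧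
      ¬ ((G.Adj q x₂ ∧ ¬ G.Adj q x₃ ∧ G.Adj q x₅ ∧ ¬ G.Adj q x₆) ∧
        (¬ G.Adj r x₂ ∧ G.Adj r x₃ ∧ ¬ G.Adj r x₅ ∧ G.Adj r x₆)) := by
    intro q r hq hr hne hqr
    have s := fun {x y : V} (h : ¬ G.Adj x y) (h' : G.Adj y x) => h h'.symm
    refine ⟨?_, ?_, ?_, ?_, ?_, ?_⟩ <;>
      rintro ⟨⟨a2, a3, a5, a6⟩, b2, b3, b5, b6⟩
    · exact link3 h.hole h.conn hq.on hr.on hqr hne o2 o5 a2 P.a25 b5.symm a5 (s b2)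
    · exact link4 h.hole h.conn hq.on hr.on hqr hne o3 o6 o5 a3 P.a36 P.a56.symm b5.symm a6 a5
        P.n35 (s b3) (s b6)
    · exact link4 h.hole h.conn hq.on hr.on hqr hne o2 o5 o6 a2 P.a25 P.a56 b6.symm a5 a6
        P.n26 (s b2) (s b5)
    · exact link4 h.hole h.conn hq.on hr.on hqr hne o6 o3 o2 a6 P.a36.symm P.a23.symm b2.symm a3 a2
        (s P.n26) (s b6) (s b3)
    · exact link4 h.hole h.conn hq.on hr.on hqr hne o5 o2 o3 a5 P.a25.symm P.a23 b3.symm a2 a3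
        (s P.n35) (s b5) (s b2)
    · exact link3 h.hole h.conn hq.on hr.on hqr hne o2 o3 a2 P.a23 b3.symm a3 (s b2)
  have m1 := mix q r hq hr hne hqr
  have m2 := mix r q hr hq hne.symm fun h => hqr h.symm
  have d23 := h.dart.pair hne hqr P.a23 P.a25 P.n35
  have d56 := h.dart.pair hne hqr P.a56.symm P.a36.symm fun h => P.n35 h.symm
  have d25 := h.dart.pair hne hqr P.a25.symm P.a56 P.n26
  have d36 := h.dart.pair hne hqr P.a36.symm P.a56.symm P.n35
  clear mix key
  grind (splits := 60) +splitImp only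

/-- If `K` touches none of `x₄, x₅, x₆`, a vertex of `K` has at most one neighbour among
`x₁, x₂, x₃`. -/
theorem Cfg.triangle_inside (h : Cfg G K x₁ x₂ x₃ x₄ x₅ x₆) (t4 : ¬ Touch G K x₄)
    (t5 : ¬ Touch G K x₅) (t6 : ¬ Touch G K x₆) {k : V} (hk : k ∈ K) :
    ¬ (G.Adj k x₁ ∧ G.Adj k x₂) ∧ ¬ (G.Adj k x₁ ∧ G.Adj k x₃) ∧ ¬ (G.Adj k x₂ ∧ G.Adj k x₃) := by
  have U := h.inside hk
  have ht := h.tri k hk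
  have k4 := mt (Touch.of_adj hk) t4
  have k5 := mt (Touch.of_adj hk) t5
  have k6 := mt (Touch.of_adj hk) t6
  obtain ⟨u1, u2, -, u4, -⟩ := U
  grind (splits := 20) +splitImp only

/-- If `K` touches the triangle `x₁x₂x₃`, outer vertices are adjacent to `x₁`; by symmetry they
are complete to the triangle. -/
theorem Cfg.triangle_adj (h : Cfg G K x₁ x₂ x₃ x₄ x₅ x₆) (t1 : Touch G K x₁)
    (t2 : Touch G K x₂) (t3 : Touch G K x₃) (t4 : ¬ Touch G K x₄) (t5 : ¬ Touch G K x₅)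
    (t6 : ¬ Touch G K x₆) {q : V} (hq : Outer G K x₁ x₂ x₃ x₄ x₅ x₆ q) : G.Adj q x₁ := by
  have P := h.prism
  have o1 := on_of_touch h.o1 t1
  have o2 := on_of_touch h.o2 t2
  have o3 := on_of_touch h.o3 t3
  have o4 := off_of_not_touch h.o4 t4
  have o5 := off_of_not_touch h.o5 t5
  have o6 := off_of_not_touch h.o6 t6
  by_contra q1
  have q456 : G.Adj q x₄ ∨ G.Adj q x₅ ∨ G.Adj q x₆ := by
    have M := h.max q hq
    grind (splits := 40) +splitImp only
  have l54 : G.Adj q x₅ → G.Adj q x₄ := fun q5 => by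
    by_contra q4
    exact link3 h.hole h.conn hq.on o1 q1 hq.q1 o5 o4 q5 P.a45.symm P.a14.symm q4
      fun h => P.n15 h.symm
  have l64 : G.Adj q x₆ → G.Adj q x₄ := fun q6 => by
    by_contra q4
    exact link3 h.hole h.conn hq.on o1 q1 hq.q1 o6 o4 q6 P.a46.symm P.a14.symm q4
      fun h => P.n16 h.symm
  have l45 : ¬ G.Adj q x₂ → G.Adj q x₄ → G.Adj q x₅ := fun q2 q4 => by
    by_contra q5
    exact link3 h.hole h.conn hq.on o2 q2 hq.q2 o4 o5 q4 P.a45 P.a25.symm q5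
      fun h => P.n24 h.symm
  have l46 : ¬ G.Adj q x₃ → G.Adj q x₄ → G.Adj q x₆ := fun q3 q4 => by
    by_contra q6
    exact link3 h.hole h.conn hq.on o3 q3 hq.q3 o4 o6 q4 P.a46 P.a36.symm q6
      fun h => P.n34 h.symm
  have q4 : G.Adj q x₄ := q456.elim id fun h => h.elim l54 l64
  obtain ⟨k, hk, qk, k1⟩ := link2 h.hole h.conn hq.on o1 q1 hq.q1 o4 q4 P.a14.symm
  have U := h.outside hq
  have W := P.outside_adj h.dart qk
  have I := h.triangle_inside t4 t5 t6 hk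
  have k1 := k1.symm
  have k2 : ¬ G.Adj k x₂ := fun k2 => I.1 ⟨k1, k2⟩
  have k3 : ¬ G.Adj k x₃ := fun k3 => I.2.1 ⟨k1, k3⟩
  have k4 := mt (Touch.of_adj hk) t4
  have k5 := mt (Touch.of_adj hk) t5
  have k6 := mt (Touch.of_adj hk) t6
  -- Otherwise `q, k, x₁, x₂, x₅` is an induced `C₅`.
  have hc5 : ¬ (¬ G.Adj q x₂ ∧ G.Adj q x₅) := fun ⟨q2, q5⟩ =>
    h.hole.c5 qk k1 P.a12 P.a25 q5.symm q1 q2 k2 k5 P.n15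
  unfold Restr at U
  unfold RestrAdj at W
  grind (splits := 40) +splitImp only

/-- `T = {x₁, x₂, x₃}`: an outer vertex is adjacent to all of `T` and to at most one other vertex of
the prism. -/
theorem Cfg.good_triangle (h : Cfg G K x₁ x₂ x₃ x₄ x₅ x₆) (t1 : Touch G K x₁)
    (t2 : Touch G K x₂) (t3 : Touch G K x₃) : Good G K x₁ x₂ x₃ x₄ x₅ x₆ := by
  have t4 : ¬ Touch G K x₄ := fun t => h.t24 ⟨t2, t⟩
  have t5 : ¬ Touch G K x₅ := fun t => h.t15 ⟨t1, t⟩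
  have t6 : ¬ Touch G K x₆ := fun t => h.t16 ⟨t1, t⟩
  have P := h.prism
  have o1 := on_of_touch h.o1 t1
  have o2 := on_of_touch h.o2 t2
  have o3 := on_of_touch h.o3 t3
  have o4 := off_of_not_touch h.o4 t4
  have o5 := off_of_not_touch h.o5 t5
  have o6 := off_of_not_touch h.o6 t6
  have key : ∀ q, Outer G K x₁ x₂ x₃ x₄ x₅ x₆ q → (G.Adj q x₁ ∧ G.Adj q x₂ ∧ G.Adj q x₃) ∧
      ¬ (G.Adj q x₄ ∧ G.Adj q x₅) ∧ ¬ (G.Adj q x₄ ∧ G.Adj q x₆) ∧ ¬ (G.Adj q x₅ ∧ G.Adj q x₆) := by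
    intro q hq
    have q1 := h.triangle_adj t1 t2 t3 t4 t5 t6 hq
    have q2 := h.rot.triangle_adj t2 t3 t1 t5 t6 t4 hq.rot
    have q3 := h.rot.rot.triangle_adj t3 t1 t2 t6 t4 t5 hq.rot.rot
    obtain ⟨k, hk, qk⟩ := hq.on.2
    have W := P.outside_adj h.dart qk
    have I := h.triangle_inside t4 t5 t6 hk
    have k4 := mt (Touch.of_adj hk) t4
    have k5 := mt (Touch.of_adj hk) t5
    have k6 := mt (Touch.of_adj hk) t6
    unfold RestrAdj at W
    refine ⟨⟨q1, q2, q3⟩, ?_⟩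
    grind (splits := 40) +splitImp only
  refine ⟨fun q hq => by have := key q hq; tauto, fun q r hq hr hne => ?_⟩
  by_contra hqr
  obtain ⟨⟨a1, a2, a3⟩, a⟩ := key q hq
  obtain ⟨⟨b1, b2, b3⟩, b⟩ := key r hr
  have d4 := h.dart.pair hne hqr P.a12 P.a14 P.n24 a1 a2 b1 b2
  have d5 := h.dart.pair hne hqr P.a12.symm P.a25 P.n15 a2 a1 b2 b1
  have d6 := h.dart.pair hne hqr P.a13.symm P.a36 P.n16 a3 a1 b3 b1
  tauto

/-- The cases in which `T` is contained in the triangle `x₁x₂x₃`. -/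
theorem Cfg.good_top (h : Cfg G K x₁ x₂ x₃ x₄ x₅ x₆) (t4 : ¬ Touch G K x₄)
    (t5 : ¬ Touch G K x₅) (t6 : ¬ Touch G K x₆) : Good G K x₁ x₂ x₃ x₄ x₅ x₆ := by
  by_cases t1 : Touch G K x₁ <;> by_cases t2 : Touch G K x₂ <;> by_cases t3 : Touch G K x₃
  · exact h.good_triangle t1 t2 t3
  · exact h.good_edge t1 t2 t3 t4 t5 t6
  · exact (h.rot.rot.good_edge t3 t1 t2 t6 t4 t5).rot
  · exact h.good_one t1 t2 t3 t4 t5 t6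
  · exact (h.rot.good_edge t2 t3 t1 t5 t6 t4).rot.rot
  · exact (h.rot.good_one t2 t3 t1 t5 t6 t4).rot.rot
  · exact (h.rot.rot.good_one t3 t1 t2 t6 t4 t5).rot
  · exact h.good_empty t1 t2 t3 t4 t5 t6

theorem Cfg.good (h : Cfg G K x₁ x₂ x₃ x₄ x₅ x₆) : Good G K x₁ x₂ x₃ x₄ x₅ x₆ := by
  -- If `x₁` touches `K`, only its partner `x₄` can touch `K` on the other side.
  have one : ∀ {x₁ x₂ x₃ x₄ x₅ x₆ : V}, Cfg G K x₁ x₂ x₃ x₄ x₅ x₆ → Touch G K x₁ →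
      Good G K x₁ x₂ x₃ x₄ x₅ x₆ := by
    intro x₁ x₂ x₃ x₄ x₅ x₆ h t1
    have t5 : ¬ Touch G K x₅ := fun t => h.t15 ⟨t1, t⟩
    have t6 : ¬ Touch G K x₆ := fun t => h.t16 ⟨t1, t⟩
    by_cases t4 : Touch G K x₄
    · exact h.good_matching t1 (fun t => h.t24 ⟨t, t4⟩) (fun t => h.t34 ⟨t, t4⟩) t4 t5 t6
    · exact h.good_top t4 t5 t6
  by_cases t1 : Touch G K x₁
  · exact one h t1
  by_cases t2 : Touch G K x₂
  · exact (one h.rot t2).rot.rot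
  by_cases t3 : Touch G K x₃
  · exact (one h.rot.rot t3).rot
  · exact (h.flip.good_top t1 t2 t3).flip

/-! ### The clique cutset -/

/-- The neighbourhood of `K`. -/
def Nbhd (G : SimpleGraph V) (K : Set V) : Set V := {u | On G K u}

theorem Cfg.isClique (h : Cfg G K x₁ x₂ x₃ x₄ x₅ x₆) : G.IsClique (Nbhd G K) := by
  obtain ⟨g, g'⟩ := h.good
  have P := h.prism
  have cases : ∀ u, On G K u → u = x₁ ∨ u = x₂ ∨ u = x₃ ∨ u = x₄ ∨ u = x₅ ∨ u = x₆ ∨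
      Outer G K x₁ x₂ x₃ x₄ x₅ x₆ u := by
    intro u hu
    by_contra! hc
    obtain ⟨c1, c2, c3, c4, c5, c6, c⟩ := hc
    exact c ⟨hu, c1, c2, c3, c4, c5, c6⟩
  have outer : ∀ u w, Outer G K x₁ x₂ x₃ x₄ x₅ x₆ u → On G K w → u ≠ w → G.Adj u w := by
    intro u w hu hw hne
    obtain ⟨g1, g2, g3, g4, g5, g6⟩ := g u hu
    rcases cases w hw with rfl | rfl | rfl | rfl | rfl | rfl | hw'
    · exact g1 hw.2
    · exact g2 hw.2
    · exact g3 hw.2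
    · exact g4 hw.2
    · exact g5 hw.2
    · exact g6 hw.2
    · exact g' u w hu hw' hne
  intro u hu w hw hne
  by_cases ou : Outer G K x₁ x₂ x₃ x₄ x₅ x₆ u
  · exact outer u w ou hw hne
  by_cases ow : Outer G K x₁ x₂ x₃ x₄ x₅ x₆ w
  · exact (outer w u ow hu hne.symm).symm
  -- Both vertices lie in the prism.
  have s := fun {x y : V} (h : G.Adj x y) => h.symm
  rcases cases u hu with rfl | rfl | rfl | rfl | rfl | rfl | c <;> try exact absurd c ou
  all_goals
    rcases cases w hw with rfl | rfl | rfl | rfl | rfl | rfl | c <;> first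
      | exact absurd rfl hne
      | exact absurd c ow
      | exact (h.t15 ⟨hu.2, hw.2⟩).elim
      | exact (h.t16 ⟨hu.2, hw.2⟩).elim
      | exact (h.t24 ⟨hu.2, hw.2⟩).elim
      | exact (h.t26 ⟨hu.2, hw.2⟩).elim
      | exact (h.t34 ⟨hu.2, hw.2⟩).elim
      | exact (h.t35 ⟨hu.2, hw.2⟩).elim
      | exact (h.t15 ⟨hw.2, hu.2⟩).elim
      | exact (h.t16 ⟨hw.2, hu.2⟩).elim
      | exact (h.t24 ⟨hw.2, hu.2⟩).elim
      | exact (h.t26 ⟨hw.2, hu.2⟩).elim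
      | exact (h.t34 ⟨hw.2, hu.2⟩).elim
      | exact (h.t35 ⟨hw.2, hu.2⟩).elim
      | (obtain ⟨p1, p2, p3, p4, p5, p6, p7, p8, p9, -⟩ := P
         first | assumption | (apply s; assumption))

/-- The neighbourhood of `K` separates `K` from the rest of the prism. -/
theorem Cfg.hasCliqueCutset (h : Cfg G K x₁ x₂ x₃ x₄ x₅ x₆) {v : V} (hv : v ∈ K) :
    HasCliqueCutset G := by
  refine ⟨Nbhd G K, h.isClique, fun hpre => ?_⟩
  obtain ⟨x, hxK, hx⟩ : ∃ x, x ∉ K ∧ ¬ Touch G K x := by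
    by_cases t1 : Touch G K x₁
    · exact ⟨x₅, h.o5, fun t5 => h.t15 ⟨t1, t5⟩⟩
    · exact ⟨x₁, h.o1, t1⟩
  have stay : ∀ a b : ↥(Nbhd G K)ᶜ, (G.induce (Nbhd G K)ᶜ).Reachable a b → a.1 ∈ K → b.1 ∈ K := by
    rintro a b ⟨w⟩
    induction w with
    | nil => exact id
    | @cons a b c hab _ ih =>
      intro ha
      refine ih ?_
      by_contra hb
      exact b.2 ⟨hb, a.1, ha, hab.symm⟩
  exact hxK (stay ⟨v, fun hn => hn.1 hv⟩ ⟨x, fun hn => hx hn.2⟩ (hpre _ _) hv)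

/-- A vertex outside and anticomplete to a prism lies in a maximal connected set `K` as in `Cfg`. -/
theorem exists_cfg [Finite V] (hd : DartFree G) (hh : HoleFree G)
    (P : Prism G x₁ x₂ x₃ x₄ x₅ x₆) {v : V} (v1 : v ≠ x₁) (v2 : v ≠ x₂) (v3 : v ≠ x₃)
    (v4 : v ≠ x₄) (v5 : v ≠ x₅) (v6 : v ≠ x₆) (a1 : ¬ G.Adj v x₁) (a2 : ¬ G.Adj v x₂)
    (a3 : ¬ G.Adj v x₃) (a4 : ¬ G.Adj v x₄) (a5 : ¬ G.Adj v x₅) (a6 : ¬ G.Adj v x₆) :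
    ∃ K, v ∈ K ∧ Cfg G K x₁ x₂ x₃ x₄ x₅ x₆ := by
  let F : Set V → Prop := fun K => v ∈ K ∧ Conn G K ∧
    (x₁ ∉ K ∧ x₂ ∉ K ∧ x₃ ∉ K ∧ x₄ ∉ K ∧ x₅ ∉ K ∧ x₆ ∉ K) ∧
    (¬ (Touch G K x₁ ∧ Touch G K x₅) ∧ ¬ (Touch G K x₁ ∧ Touch G K x₆) ∧
     ¬ (Touch G K x₂ ∧ Touch G K x₄) ∧ ¬ (Touch G K x₂ ∧ Touch G K x₆) ∧
     ¬ (Touch G K x₃ ∧ Touch G K x₄) ∧ ¬ (Touch G K x₃ ∧ Touch G K x₅)) ∧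
    ∀ k ∈ K, ¬ (G.Adj k x₁ ∧ G.Adj k x₂ ∧ G.Adj k x₃) ∧ ¬ (G.Adj k x₄ ∧ G.Adj k x₅ ∧ G.Adj k x₆)
  have hF : F {v} := by
    have single : ∀ {x}, ¬ G.Adj v x → ¬ Touch G {v} x := by
      rintro x hx ⟨k, rfl, hk⟩
      exact hx hk.symm
    refine ⟨rfl, ?_, ⟨v1.symm, v2.symm, v3.symm, v4.symm, v5.symm, v6.symm⟩,
      ⟨fun h => single a1 h.1, fun h => single a1 h.1, fun h => single a2 h.1,
        fun h => single a2 h.1, fun h => single a3 h.1, fun h => single a3 h.1⟩, ?_⟩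
    · rintro x rfl y rfl
      exact .refl
    · rintro k rfl
      exact ⟨fun h => a1 h.1, fun h => a4 h.1⟩
  obtain ⟨K, -, hK⟩ := (Set.toFinite {K | F K}).exists_le_maximal (a := {v}) hF
  obtain ⟨hv, conn, ⟨o1, o2, o3, o4, o5, o6⟩, ⟨t15, t16, t24, t26, t34, t35⟩, tri⟩ := hK.prop
  refine ⟨K, hv, hd, hh, P, conn, o1, o2, o3, o4, o5, o6, t15, t16, t24, t26, t34, t35,
    fun k hk => (tri k hk).1, fun k hk => (tri k hk).2, fun q hq => ?_⟩
  by_contra hc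
  obtain ⟨⟨hqK, k, hk, hqk⟩, q1, q2, q3, q4, q5, q6⟩ := hq
  simp only [not_or] at hc
  obtain ⟨c1, c2, c⟩ := hc
  have ins : ∀ {x}, Touch G (Insert.insert q K) x → Touch G K x ∨ G.Adj q x := by
    rintro x ⟨l, rfl | hl, hxl⟩
    · exact Or.inr hxl.symm
    · exact Or.inl ⟨l, hl, hxl⟩
  have hF' : F (Insert.insert q K) := by
    obtain ⟨d1, d2, d3, d4, d5, d6⟩ := c
    refine ⟨Or.inr hv, conn.insert hk hqk, ?_,
      ⟨fun h => d1 ⟨ins h.1, ins h.2⟩, fun h => d2 ⟨ins h.1, ins h.2⟩,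
        fun h => d3 ⟨ins h.1, ins h.2⟩, fun h => d4 ⟨ins h.1, ins h.2⟩,
        fun h => d5 ⟨ins h.1, ins h.2⟩, fun h => d6 ⟨ins h.1, ins h.2⟩⟩, ?_⟩
    · simp only [Set.mem_insert_iff, not_or]
      exact ⟨⟨q1.symm, o1⟩, ⟨q2.symm, o2⟩, ⟨q3.symm, o3⟩, ⟨q4.symm, o4⟩, ⟨q5.symm, o5⟩,
        ⟨q6.symm, o6⟩⟩
    · rintro l (rfl | hl)
      · exact ⟨c1, c2⟩
      · exact tri l hl
  exact hqK (hK.le_of_ge hF' (Set.subset_insert q K) (Set.mem_insert q K))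
end

theorem stmt6 {V : Type*} [Fintype V] (G : SimpleGraph V)
    (hconn : G.Connected)
    (hhole : ∀ k : ℕ, 5 ≤ k → IsEmpty (cycleGraph k ↪g G))
    (hdart : IsEmpty (dartGraph ↪g G))
    (hatom : ¬ HasCliqueCutset G)
    (v : V) :
    IsEmpty ((cycleGraph 6)ᶜ ↪g G.induce (vertexAnti G v)) := by
  refine ⟨fun f => ?_⟩
  have adj : ∀ i j, G.Adj (f i).1 (f j).1 ↔ (cycleGraph 6)ᶜ.Adj i j := fun i j =>
    f.map_rel_iff (a := i) (b := j)
  -- The triangles of the complement of `C₆` are the even and the odd vertices, and the matching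
  -- joins opposite vertices.
  have P : Prism G (f 0).1 (f 2).1 (f 4).1 (f 3).1 (f 5).1 (f 1).1 := by
    constructor <;> rw [adj] <;> simp only [compl_adj, cycleGraph_adj'] <;> decide
  have ne : ∀ i, v ≠ (f i).1 := fun i => (f i).2.1.symm
  have na : ∀ i, ¬ G.Adj v (f i).1 := fun i => (f i).2.2
  obtain ⟨K, hv, h⟩ := exists_cfg (dartFree_of_isEmpty hdart) (holeFree_of_isEmpty hhole) P
    (ne _) (ne _) (ne _) (ne _) (ne _) (ne _) (na _) (na _) (na _) (na _) (na _) (na _)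
  exact hatom (h.hasCliqueCutset hv)
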